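/- Let (X',d') and (X,d) be compact metric spaces, {𝒜'_r}_{r∈[0,∞)} a filtered family of admissible curves on X' and {𝒜_r}_{r∈[0,∞)} a filtered family of admissible curves on X. Let f : X' → X be a surjective map and K > 0 a constant with d(f(a),f(b)) ≤ K·d'(a,b) for all a,b ∈ X', and assume that { f∘γ' : γ' ∈ 𝒜'_r(x') } = 𝒜_r(f(x')) for every r ≥ 0 and every x' ∈ X'. Then h({d'_r},X') ≥ h({d_r},X). (This is the abstract content of the theorem that for a Finsler isometric submersion f : M' → M between compact Finsler manifolds, the entropy of the lifted family of horizontal curves on M' is at least the entropy of the given family on M.) -/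

import Mathlib

open Filter Topology unitInterval
open scoped ENNReal NNReal

variable {X : Type*}

/-- `ρ` is a metric on `X`. -/
def IsMetric (ρ : X → X → ℝ) : Prop :=
  (∀ x y, ρ x y = 0 ↔ x = y) ∧ (∀ x y, ρ x y = ρ y x) ∧ ∀ x y z, ρ x z ≤ ρ x y + ρ y z

/-- the curve `t ↦ γ(c·t)` obtained from `γ` by rescaling the parameter by `c ∈ [0,1]`. -/
def rescaleCurve [TopologicalSpace X] (c : unitInterval) (γ : C(unitInterval, X)) :
    C(unitInterval, X) :=
  γ.comp ⟨fun t => c * t,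
    Continuous.subtype_mk (continuous_const.mul continuous_subtype_val) _⟩

/-- A filtered family of admissible curves on `X`: `𝒜 0` is the set of constant curves,
every `𝒜 r` contains the constant curves, the family is monotone in `r`, and for
`0 < s < r` every curve of `𝒜 r` can be rescaled into a curve of `𝒜 s`. -/
structure IsAdmissibleFiltration [TopologicalSpace X]
    (𝒜 : ℝ≥0 → Set C(unitInterval, X)) : Prop where
  zero_eq : 𝒜 0 = {γ | ∃ x : X, γ = ContinuousMap.const unitInterval x}
  const_mem : ∀ (r : ℝ≥0) (x : X), ContinuousMap.const unitInterval x ∈ 𝒜 r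
  mono : ∀ ⦃s r : ℝ≥0⦄, s ≤ r → 𝒜 s ⊆ 𝒜 r
  rescale : ∀ ⦃s r : ℝ≥0⦄, 0 < s → s < r → ∀ γ ∈ 𝒜 r,
    ∃ c : unitInterval, rescaleCurve c γ ∈ 𝒜 s

/-- `𝒜_r(x)`: the curves of `𝒜 r` starting at `x`. -/
def curveSet [TopologicalSpace X] (𝒜 : ℝ≥0 → Set C(unitInterval, X)) (r : ℝ≥0) (x : X) :
    Set C(unitInterval, X) :=
  {γ | γ ∈ 𝒜 r ∧ γ 0 = x}

/-- `δ_r(x,y) = sup_{γ ∈ 𝒜_r(x)} inf_{μ ∈ 𝒜_r(y)} d̄(γ,μ)`, where `d̄` is the uniform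
distance on `C([0,1],X)` (which is the distance of the metric space `C([0,1],X)`). -/
noncomputable def deltaR [MetricSpace X] (𝒜 : ℝ≥0 → Set C(unitInterval, X)) (r : ℝ≥0)
    (x y : X) : ℝ :=
  ⨆ γ : curveSet 𝒜 r x, ⨅ μ : curveSet 𝒜 r y, dist (γ : C(unitInterval, X)) μ

/-- `d_r(x,y) = δ_r(x,y) + δ_r(y,x)`. -/
noncomputable def dR [MetricSpace X] (𝒜 : ℝ≥0 → Set C(unitInterval, X)) (r : ℝ≥0)
    (x y : X) : ℝ :=
  deltaR 𝒜 r x y + deltaR 𝒜 r y x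

/-- `M(ρ,ε)`: the minimal number of closed `ρ`-balls of radius `ε` needed to cover `X`. -/
noncomputable def coverNum (ρ : X → X → ℝ) (ε : ℝ) : ℕ∞ :=
  sInf {n : ℕ∞ | ∃ s : Finset X, (s.card : ℕ∞) = n ∧ ∀ x : X, ∃ c ∈ s, ρ c x ≤ ε}

/-- extended logarithm on `ℕ∞`, with values in `[0,∞]`. -/
noncomputable def elog (n : ℕ∞) : ℝ≥0∞ :=
  if n = ⊤ then ⊤ else ENNReal.ofReal (Real.log (n.toNat : ℝ))

/-- entropy of a family of distances: `sup_{ε>0} limsup_{r→∞} (1/r) log M(d_r,ε)`. -/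
noncomputable def entropy (d : ℝ≥0 → X → X → ℝ) : ℝ≥0∞ :=
  ⨆ (ε : ℝ) (_ : 0 < ε),
    Filter.limsup (fun r : ℝ≥0 => elog (coverNum (d r) ε) / (r : ℝ≥0∞)) Filter.atTop

/-! A uniformly continuous `f` acts uniformly continuously on curves by `γ' ↦ f ∘ γ'`. If
`d'_r(a,b)` is small, a curve `γ` from `f a` lifts to a curve `γ'` from `a`, which is shadowed by an
admissible curve `μ'` from `b`, and `f ∘ μ'` is then an admissible curve from `f b` shadowing `γ`;
hence `d_r(f a, f b)` is small. As the modulus of continuity does not depend on `r`, `f` carries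
covers by `d'_r`-balls to covers by `d_r`-balls at a scale independent of `r`, and letting `r → ∞`
compares the entropies. -/

theorem elog_mono : Monotone elog := by
  intro m n hmn
  induction n using ENat.recTopCoe with
  | top => simp only [elog, if_true, le_top]
  | coe n =>
    lift m to ℕ using ne_top_of_le_ne_top (ENat.natCast_ne_top n) hmn
    simp only [elog, ENat.natCast_ne_top, if_false, ENat.toNat_natCast]
    apply ENNReal.ofReal_le_ofReal
    rcases m.eq_zero_or_pos with rfl | hm
    · simpa only [Nat.cast_zero, Real.log_zero] using Real.log_natCast_nonneg n
    · exact Real.log_le_log (mod_cast hm) (mod_cast hmn)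

section Covering

variable {Y : Type*} {f : Y → X}

theorem coverNum_le_of_surjective {ρ : X → X → ℝ} {ρ' : Y → Y → ℝ} {ε η : ℝ}
    (hsurj : Function.Surjective f) (hf : ∀ a b, ρ' a b ≤ η → ρ (f a) (f b) ≤ ε) :
    coverNum ρ ε ≤ coverNum ρ' η := by
  classical
  refine le_sInf ?_
  rintro _ ⟨s, rfl, hs⟩
  have hcover : ∀ x, ∃ c ∈ s.image f, ρ c x ≤ ε := by
    intro x
    obtain ⟨y, rfl⟩ := hsurj x
    obtain ⟨c, hc, hcy⟩ := hs y
    exact ⟨f c, Finset.mem_image_of_mem f hc, hf c y hcy⟩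
  calc coverNum ρ ε ≤ (s.image f).card := sInf_le ⟨s.image f, rfl, hcover⟩
    _ ≤ s.card := mod_cast Finset.card_image_le

theorem entropy_le_of_surjective {d : ℝ≥0 → X → X → ℝ} {d' : ℝ≥0 → Y → Y → ℝ}
    (hsurj : Function.Surjective f)
    (hf : ∀ ε > 0, ∃ η > 0, ∀ᶠ r in atTop, ∀ a b, d' r a b ≤ η → d r (f a) (f b) ≤ ε) :
    entropy d ≤ entropy d' := by
  refine iSup₂_le fun ε hε => ?_
  obtain ⟨η, hη, hmod⟩ := hf ε hε
  refine le_iSup₂_of_le η hη (limsup_le_limsup ?_)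
  filter_upwards [hmod] with r hr
  exact ENNReal.div_le_div_right (elog_mono (coverNum_le_of_surjective hsurj hr)) _

end Covering

instance boundedSpace_continuousMap {α β : Type*} [TopologicalSpace α] [CompactSpace α]
    [PseudoMetricSpace β] [BoundedSpace β] : BoundedSpace C(α, β) := by
  obtain ⟨C, hC⟩ := Metric.boundedSpace_iff.mp ‹BoundedSpace β›
  refine Metric.boundedSpace_iff.mpr ⟨max C 0, fun f g => ?_⟩
  exact (ContinuousMap.dist_le (le_max_right C 0)).mpr fun t => (hC _ _).trans (le_max_left C 0)

section Shadowing

variable [MetricSpace X] {𝒜 : ℝ≥0 → Set C(unitInterval, X)} {r : ℝ≥0} {x y : X}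

theorem deltaR_eq_iSup_infDist :
    deltaR 𝒜 r x y = ⨆ γ : curveSet 𝒜 r x, Metric.infDist γ.1 (curveSet 𝒜 r y) := by
  simp only [deltaR, Metric.infDist_eq_iInf]

theorem deltaR_nonneg : 0 ≤ deltaR 𝒜 r x y :=
  Real.iSup_nonneg fun _ => Real.iInf_nonneg fun _ => dist_nonneg

theorem deltaR_le_of_shadowing {ε : ℝ} (hε : 0 ≤ ε)
    (hshadow : ∀ γ ∈ curveSet 𝒜 r x, ∃ μ ∈ curveSet 𝒜 r y, dist γ μ ≤ ε) :
    deltaR 𝒜 r x y ≤ ε := by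
  rw [deltaR_eq_iSup_infDist]
  refine Real.iSup_le (fun γ => ?_) hε
  obtain ⟨μ, hμ, hγμ⟩ := hshadow γ γ.2
  exact (Metric.infDist_le_dist_of_mem hμ).trans hγμ

theorem infDist_le_deltaR [BoundedSpace X] {γ : C(unitInterval, X)} (hγ : γ ∈ curveSet 𝒜 r x)
    (hy : (curveSet 𝒜 r y).Nonempty) :
    Metric.infDist γ (curveSet 𝒜 r y) ≤ deltaR 𝒜 r x y := by
  obtain ⟨μ, hμ⟩ := hy
  obtain ⟨C, hC⟩ := Metric.boundedSpace_iff.mp (inferInstance : BoundedSpace C(unitInterval, X))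
  have hbdd : BddAbove (Set.range fun ν : curveSet 𝒜 r x =>
      Metric.infDist ν.1 (curveSet 𝒜 r y)) :=
    ⟨C, Set.forall_mem_range.mpr fun ν => (Metric.infDist_le_dist_of_mem hμ).trans (hC ν μ)⟩
  rw [deltaR_eq_iSup_infDist]
  exact le_ciSup hbdd ⟨γ, hγ⟩

theorem exists_shadow_of_deltaR_lt [BoundedSpace X] {η : ℝ} {γ : C(unitInterval, X)}
    (hγ : γ ∈ curveSet 𝒜 r x) (hy : (curveSet 𝒜 r y).Nonempty) (hη : deltaR 𝒜 r x y < η) :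
    ∃ μ ∈ curveSet 𝒜 r y, dist γ μ < η :=
  (Metric.infDist_lt_iff hy).mp ((infDist_le_deltaR hγ hy).trans_lt hη)

end Shadowing

section Lifting

variable {X' : Type*} [MetricSpace X'] [BoundedSpace X'] [MetricSpace X]
  {𝒜' : ℝ≥0 → Set C(unitInterval, X')} {𝒜 : ℝ≥0 → Set C(unitInterval, X)} {f : C(X', X)}

theorem deltaR_map_le_of_deltaR_lt {r : ℝ≥0} {a b : X'} {ε η : ℝ} (hε : 0 ≤ ε)
    (hf : ∀ ⦃γ μ : C(unitInterval, X')⦄, dist γ μ < η → dist (f.comp γ) (f.comp μ) ≤ ε)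
    (hb : (curveSet 𝒜' r b).Nonempty)
    (hlift : curveSet 𝒜 r (f a) ⊆ f.comp '' curveSet 𝒜' r a)
    (hmaps : Set.MapsTo f.comp (curveSet 𝒜' r b) (curveSet 𝒜 r (f b)))
    (hab : deltaR 𝒜' r a b < η) :
    deltaR 𝒜 r (f a) (f b) ≤ ε := by
  refine deltaR_le_of_shadowing hε fun γ hγ => ?_
  obtain ⟨γ', hγ', rfl⟩ := hlift hγ
  obtain ⟨μ', hμ', hdist⟩ := exists_shadow_of_deltaR_lt hγ' hb hab
  exact ⟨f.comp μ', hmaps hμ', hf hdist⟩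

theorem exists_pos_forall_dR_map_le (hf : UniformContinuous f)
    (hne : ∀ r x', (curveSet 𝒜' r x').Nonempty)
    (himg : ∀ r x', f.comp '' curveSet 𝒜' r x' = curveSet 𝒜 r (f x')) {ε : ℝ} (hε : 0 < ε) :
    ∃ η > 0, ∀ r a b, dR 𝒜' r a b ≤ η → dR 𝒜 r (f a) (f b) ≤ ε := by
  obtain ⟨η, hη, hcomp⟩ := Metric.uniformContinuous_iff.mp
    (ContinuousMap.uniformContinuous_comp (α := unitInterval) f hf) (ε / 2) (half_pos hε)
  have hdelta : ∀ r a b, deltaR 𝒜' r a b < η → deltaR 𝒜 r (f a) (f b) ≤ ε / 2 :=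
    fun r a b => deltaR_map_le_of_deltaR_lt (half_pos hε).le (fun _ _ h => (hcomp h).le)
      (hne r b) (himg r a).superset (Set.mapsTo_iff_image_subset.mpr (himg r b).subset)
  refine ⟨η / 2, half_pos hη, fun r a b hab => ?_⟩
  have hab_nonneg : 0 ≤ deltaR 𝒜' r a b := deltaR_nonneg
  have hba_nonneg : 0 ≤ deltaR 𝒜' r b a := deltaR_nonneg
  unfold dR at hab ⊢
  linarith [hdelta r a b (by linarith), hdelta r b a (by linarith)]

end Lifting

theorem IsAdmissibleFiltration.curveSet_nonempty [TopologicalSpace X]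
    {𝒜 : ℝ≥0 → Set C(unitInterval, X)} (h𝒜 : IsAdmissibleFiltration 𝒜) (r : ℝ≥0) (x : X) :
    (curveSet 𝒜 r x).Nonempty :=
  ⟨ContinuousMap.const unitInterval x, h𝒜.const_mem r x, rfl⟩

theorem entropy_le_entropy_of_lift_general {X' : Type*} [MetricSpace X'] [BoundedSpace X']
    [MetricSpace X] {𝒜' : ℝ≥0 → Set C(unitInterval, X')} {𝒜 : ℝ≥0 → Set C(unitInterval, X)}
    {f : C(X', X)} (hsurj : Function.Surjective f) (hf : UniformContinuous f)
    (hne : ∀ r x', (curveSet 𝒜' r x').Nonempty)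
    (himg : ∀ r x', f.comp '' curveSet 𝒜' r x' = curveSet 𝒜 r (f x')) :
    entropy (fun r => dR 𝒜 r) ≤ entropy (fun r => dR 𝒜' r) := by
  refine entropy_le_of_surjective hsurj fun ε hε => ?_
  obtain ⟨η, hη, hmod⟩ := exists_pos_forall_dR_map_le hf hne himg hε
  exact ⟨η, hη, Eventually.of_forall hmod⟩

/-- If `f : X' → X` is a surjective `K`-Lipschitz map sending the curve sets `𝒜'_r(x')`
onto `𝒜_r(f x')`, then `h({d'_r},X') ≥ h({d_r},X)`.  (Abstract form of: for a Finsler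
isometric submersion between compact Finsler manifolds, the entropy of the lifted family of
horizontal curves upstairs is at least the entropy of the given family downstairs.) -/
theorem entropy_le_entropy_of_lift {X' : Type*} [MetricSpace X'] [CompactSpace X']
    [MetricSpace X] [CompactSpace X]
    (𝒜' : ℝ≥0 → Set C(unitInterval, X')) (𝒜 : ℝ≥0 → Set C(unitInterval, X))
    (h𝒜' : IsAdmissibleFiltration 𝒜') (h𝒜 : IsAdmissibleFiltration 𝒜)
    (f : X' → X) (hsurj : Function.Surjective f)
    (K : ℝ≥0) (hK : 0 < K) (hf : LipschitzWith K f)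
    (himg : ∀ (r : ℝ≥0) (x' : X'),
      (fun γ' : C(unitInterval, X') =>
        (ContinuousMap.mk f hf.continuous).comp γ') '' curveSet 𝒜' r x' =
        curveSet 𝒜 r (f x')) :
    entropy (fun r => dR 𝒜 r) ≤ entropy (fun r => dR 𝒜' r) :=
  entropy_le_entropy_of_lift_general (f := ⟨f, hf.continuous⟩) hsurj hf.uniformContinuous
    h𝒜'.curveSet_nonempty himg
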